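/- For every a > 0 one has inf{ E_KdV(φ) : φ ∈ H¹(ℝ), ∫φ² dx = 2aα_KdV } = a^{5/3}·c_KdV. Specifically: every φ ∈ H¹(ℝ) with ∫φ² dx = 2aα_KdV satisfies E_KdV(φ) ≥ a^{5/3}c_KdV, and the function x ↦ a^{2/3}·φ_KdV(a^{1/3}x) satisfies the constraint and attains the value a^{5/3}c_KdV. -/

import Mathlib

open MeasureTheory

noncomputable def sech (x : ℝ) : ℝ := 1 / Real.cosh x

/-- `H1Pair φ φ'` expresses that `φ` belongs to `H¹(ℝ)` with weak derivative `φ'`. -/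
def H1Pair (φ φ' : ℝ → ℝ) : Prop :=
  Continuous φ ∧ Integrable (fun x => (φ x) ^ 2) ∧ Integrable (fun x => (φ' x) ^ 2) ∧
    ∀ a b : ℝ, a ≤ b → φ b - φ a = ∫ t in a..b, φ' t

/-- The Korteweg–de Vries energy `E_KdV(φ) = (1/2)∫ (c φ'² + d φ³) dx`. -/
noncomputable def EKdV (c d : ℝ) (φ φ' : ℝ → ℝ) : ℝ :=
  (1 / 2) * ∫ x : ℝ, (c * (φ' x) ^ 2 + d * (φ x) ^ 3)

/-!
Let `M = -min φ`. Then `c φ'² + d φ² (M + φ)` is a sum of two squares, and completing the square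
(Bogomolny's trick) on either side of the minimum point bounds its integral below by
`(16 / 15) √(c d) M ^ (5 / 2)`. The same integral equals `2 E(φ) + d M ∫ φ²`, so for prescribed
`∫ φ²` the energy is bounded below by a function of `M` alone, and Young's inequality
`5 t² u³ ≤ 2 t⁵ + 3 u⁵` with `t = √M` removes `M`. Equality holds for the `sech²` soliton, whose
mass and energy become integrals of polynomials over `(-1, 1)` under the substitution `s = tanh x`.
-/

open Filter Set Topology

lemma absolutelyContinuousOnInterval_comp_of_lipschitzOnWith {X Y : Type*} [PseudoMetricSpace X]
    [PseudoMetricSpace Y] {f : ℝ → X} {G : X → Y} {a b : ℝ} {K : NNReal}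
    (hf : AbsolutelyContinuousOnInterval f a b) (hG : LipschitzOnWith K G (f '' uIcc a b)) :
    AbsolutelyContinuousOnInterval (G ∘ f) a b := by
  rw [absolutelyContinuousOnInterval_iff] at hf ⊢
  intro ε hε
  obtain ⟨δ, hδ, hfδ⟩ := hf (ε / (K + 1)) (by positivity)
  refine ⟨δ, hδ, fun E hE hEδ => ?_⟩
  calc ∑ i ∈ Finset.range E.1, dist (G (f (E.2 i).1)) (G (f (E.2 i).2))
      ≤ ∑ i ∈ Finset.range E.1, (K + 1) * dist (f (E.2 i).1) (f (E.2 i).2) := by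
        refine Finset.sum_le_sum fun i hi => ?_
        obtain ⟨hleft, hright⟩ := hE.1 i hi
        refine (hG.dist_le_mul _ (mem_image_of_mem f hleft) _ (mem_image_of_mem f hright)).trans ?_
        gcongr
        linarith
    _ = (K + 1) * ∑ i ∈ Finset.range E.1, dist (f (E.2 i).1) (f (E.2 i).2) := by
        rw [Finset.mul_sum]
    _ < (K + 1) * (ε / (K + 1)) := by gcongr; exact hfδ E hE hEδ
    _ = ε := by field

/-- `f` is locally absolutely continuous on `ℝ` with almost everywhere derivative `f'`, expressed
as `f` being an indefinite Lebesgue integral of a locally integrable `f'`. -/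
structure IsIndefiniteIntegral (f f' : ℝ → ℝ) : Prop where
  locallyIntegrable : LocallyIntegrable f'
  sub_eq_integral : ∀ a b, f b - f a = ∫ t in a..b, f' t

namespace IsIndefiniteIntegral

variable {f f' : ℝ → ℝ}

lemma intervalIntegrable (h : IsIndefiniteIntegral f f') (a b : ℝ) :
    IntervalIntegrable f' volume a b :=
  intervalIntegrable_iff.2 <|
    (h.locallyIntegrable.integrableOn_isCompact isCompact_uIcc).mono_set uIoc_subset_uIcc

lemma eq_add_integral (h : IsIndefiniteIntegral f f') (a : ℝ) :
    f = fun x => f a + ∫ t in a..x, f' t := by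
  funext x
  rw [← h.sub_eq_integral a x, add_sub_cancel]

lemma continuous (h : IsIndefiniteIntegral f f') : Continuous f := by
  rw [h.eq_add_integral 0]
  exact continuous_const.add (intervalIntegral.continuous_primitive h.intervalIntegrable 0)

lemma ae_hasDerivAt (h : IsIndefiniteIntegral f f') : ∀ᵐ x, HasDerivAt f (f' x) x := by
  filter_upwards [_root_.LocallyIntegrable.ae_hasDerivAt_integral h.locallyIntegrable] with x hx
  rw [h.eq_add_integral 0]
  exact (hx 0).const_add (f 0)

lemma absolutelyContinuousOnInterval (h : IsIndefiniteIntegral f f') (a b : ℝ) :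
    AbsolutelyContinuousOnInterval f a b := by
  rw [h.eq_add_integral a]
  have hconst : AbsolutelyContinuousOnInterval (fun _ => f a) a b :=
    contDiff_const.contDiffOn.absolutelyContinuousOnInterval
  exact hconst.add
    ((h.intervalIntegrable a b).absolutelyContinuousOnInterval_intervalIntegral left_mem_uIcc)

lemma comp {G g : ℝ → ℝ} (h : IsIndefiniteIntegral f f') (hG : ∀ s, HasDerivAt G (g s) s)
    (hg : Continuous g) :
    IsIndefiniteIntegral (fun x => G (f x)) (fun x => g (f x) * f' x) where
  locallyIntegrable := h.locallyIntegrable.continuous_mul (hg.comp h.continuous)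
  sub_eq_integral a b := by
    have hG_contDiff : ContDiff ℝ 1 G := by
      rw [contDiff_one_iff_deriv, funext fun s => (hG s).deriv]
      exact ⟨fun s => (hG s).differentiableAt, hg⟩
    obtain ⟨C, hC⟩ := (h.absolutelyContinuousOnInterval a b).exists_bound
    obtain ⟨K, hK⟩ := (hG_contDiff.contDiffOn (s := Icc (-C) C)).exists_lipschitzOnWith
      one_ne_zero (convex_Icc _ _) isCompact_Icc
    have hGf := absolutelyContinuousOnInterval_comp_of_lipschitzOnWith
      (h.absolutelyContinuousOnInterval a b)
      (hK.mono <| image_subset_iff.2 fun x hx => abs_le.1 (hC x hx))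
    refine Eq.trans hGf.integral_deriv_eq_sub.symm ?_
    refine intervalIntegral.integral_congr_ae ?_
    filter_upwards [h.ae_hasDerivAt] with x hx _
    exact ((hG (f x)).comp x hx).deriv

lemma tendsto_atTop_zero (h : IsIndefiniteIntegral f f') (hf : Integrable f)
    (hf' : Integrable f') : Tendsto f atTop (𝓝 0) := by
  have hlim : Tendsto f atTop (𝓝 (f 0 + ∫ t in Ioi 0, f' t)) := by
    nth_rw 1 [h.eq_add_integral 0]
    exact (intervalIntegral_tendsto_integral_Ioi 0 hf'.integrableOn tendsto_id).const_add (f 0)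
  have hvol : ∀ s ∈ (atTop : Filter ℝ), volume s = ⊤ := fun s hs => by
    obtain ⟨b, hb⟩ := mem_atTop_sets.1 hs
    exact measure_mono_top hb Real.volume_Ici
  rwa [(hf.integrableAtFilter atTop).eq_zero_of_tendsto hvol hlim] at hlim

lemma tendsto_cocompact_zero (h : IsIndefiniteIntegral f f') (hf : Integrable f)
    (hf' : Integrable f') : Tendsto f (cocompact ℝ) (𝓝 0) := by
  have hreflect : IsIndefiniteIntegral (fun x => f (-x)) (fun x => -f' (-x)) :=
    ⟨hf'.comp_neg.neg.locallyIntegrable, fun a b => by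
      rw [h.sub_eq_integral, intervalIntegral.integral_neg, intervalIntegral.integral_comp_neg,
        intervalIntegral.integral_symm]⟩
  have hbot : Tendsto f atBot (𝓝 0) := by
    simpa only [Function.comp_def, neg_neg] using
      (hreflect.tendsto_atTop_zero hf.comp_neg hf'.comp_neg.neg).comp tendsto_neg_atBot_atTop
  rw [cocompact_eq_atBot_atTop]
  exact hbot.sup (h.tendsto_atTop_zero hf hf')

lemma abs_two_mul_sub_le_integral {G g : ℝ → ℝ} {k a b : ℝ} (h : IsIndefiniteIntegral f f')
    (hG : ∀ s, HasDerivAt G (g s) s) (hg : Continuous g) (hab : a ≤ b)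
    (hi : IntervalIntegrable (fun x => (k * f' x) ^ 2 + g (f x) ^ 2) volume a b) :
    |2 * k * (G (f b) - G (f a))| ≤ ∫ x in a..b, ((k * f' x) ^ 2 + g (f x) ^ 2) := by
  have hGf := h.comp hG hg
  rw [hGf.sub_eq_integral a b, ← intervalIntegral.integral_const_mul]
  refine (intervalIntegral.abs_integral_le_integral_abs hab).trans ?_
  refine intervalIntegral.integral_mono_on hab ((hGf.intervalIntegrable a b).const_mul _).abs hi
    fun x _ => abs_le.2 ⟨?_, ?_⟩
  · linarith [sq_nonneg (k * f' x + g (f x))]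
  · linarith [sq_nonneg (k * f' x - g (f x))]

/-- The Bogomolny bound: an `f` with limit `l` at both ends passes twice between `l` and `f x₀`. -/
lemma four_mul_sub_le_integral {G g : ℝ → ℝ} {k l : ℝ} (h : IsIndefiniteIntegral f f')
    (hl : Tendsto f (cocompact ℝ) (𝓝 l)) (hG : ∀ s, HasDerivAt G (g s) s) (hg : Continuous g)
    (hi : Integrable fun x => (k * f' x) ^ 2 + g (f x) ^ 2) (x₀ : ℝ) :
    4 * k * (G (f x₀) - G l) ≤ ∫ x, ((k * f' x) ^ 2 + g (f x) ^ 2) := by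
  rw [cocompact_eq_atBot_atTop, tendsto_sup] at hl
  have hG_lim : Tendsto G (𝓝 l) (𝓝 (G l)) := (hG l).continuousAt
  have hlim := ((hG_lim.comp (hl.1.comp tendsto_neg_atTop_atBot)).const_sub (G (f x₀))).add
    ((hG_lim.comp hl.2).const_sub (G (f x₀))) |>.const_mul (2 * k)
  have hbound : ∀ᶠ R in atTop, 2 * k * ((G (f x₀) - G (f (-R))) + (G (f x₀) - G (f R))) ≤
      ∫ x in -R..R, ((k * f' x) ^ 2 + g (f x) ^ 2) := by
    filter_upwards [eventually_ge_atTop |x₀|] with R hR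
    obtain ⟨hleft, hright⟩ := abs_le.1 hR
    have hle_left := le_of_abs_le
      (h.abs_two_mul_sub_le_integral hG hg hleft hi.intervalIntegrable)
    have hle_right := neg_le_of_abs_le
      (h.abs_two_mul_sub_le_integral hG hg hright hi.intervalIntegrable)
    rw [← intervalIntegral.integral_add_adjacent_intervals (b := x₀) hi.intervalIntegrable
      hi.intervalIntegrable]
    linarith
  calc 4 * k * (G (f x₀) - G l)
      = 2 * k * ((G (f x₀) - G l) + (G (f x₀) - G l)) := by ring
    _ ≤ ∫ x, ((k * f' x) ^ 2 + g (f x) ^ 2) := le_of_tendsto_of_tendsto hlim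
        (intervalIntegral_tendsto_integral hi tendsto_neg_atTop_atBot tendsto_id) hbound

end IsIndefiniteIntegral

namespace H1Pair

variable {φ φ' : ℝ → ℝ}

/-- An interval on which `φ'` is not integrable contributes the junk value `0` to the increments of
`φ`, so the increments across a point where local integrability fails all vanish. -/
lemma eq_const_of_not_integrableAtFilter {p : ℝ} (h : H1Pair φ φ')
    (hp : ¬IntegrableAtFilter φ' (𝓝 p)) : φ = fun _ => φ (p + 1) := by
  have hjump : ∀ a b, a < p → p < b → φ b = φ a := fun a b ha hb => by
    have hab : a ≤ b := (ha.trans hb).le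
    have hnot : ¬IntervalIntegrable φ' volume a b := fun hi =>
      hp ⟨Ioc a b, Ioc_mem_nhds ha hb, (intervalIntegrable_iff_integrableOn_Ioc_of_le hab).1 hi⟩
    rw [← sub_eq_zero, h.2.2.2 a b hab, intervalIntegral.integral_undef hnot]
  refine h.1.ext_on (dense_compl_singleton p) continuous_const fun x hx => ?_
  rcases lt_or_gt_of_ne hx with hlt | hgt
  · exact (hjump x (p + 1) hlt (by linarith)).symm
  · exact (hjump (p - 1) x (by linarith) hgt).trans
      (hjump (p - 1) (p + 1) (by linarith) (by linarith)).symm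

lemma isIndefiniteIntegral (h : H1Pair φ φ') (hφ : φ ≠ 0) : IsIndefiniteIntegral φ φ' where
  locallyIntegrable := by
    by_contra hloc
    obtain ⟨p, hp⟩ := not_forall.1 hloc
    have hconst := h.eq_const_of_not_integrableAtFilter hp
    have hint : Integrable (fun _ : ℝ => φ (p + 1) ^ 2) :=
      h.2.1.congr (ae_of_all _ fun x => congrArg (· ^ 2) (congrFun hconst x))
    have hzero : φ (p + 1) = 0 := by simpa [integrable_const_iff, isFiniteMeasure_iff] using hint
    exact hφ (hconst.trans (funext fun _ => hzero))
  sub_eq_integral a b := by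
    rcases le_total a b with hab | hba
    · exact h.2.2.2 a b hab
    · rw [intervalIntegral.integral_symm, ← h.2.2.2 b a hba, neg_sub]

lemma tendsto_cocompact_zero (h : H1Pair φ φ') (hφ : φ ≠ 0) : Tendsto φ (cocompact ℝ) (𝓝 0) := by
  have hprim := h.isIndefiniteIntegral hφ
  have hφ_memLp : MemLp φ 2 :=
    (memLp_two_iff_integrable_sq h.1.aestronglyMeasurable).2 h.2.1
  have hφ'_memLp : MemLp φ' 2 :=
    (memLp_two_iff_integrable_sq hprim.locallyIntegrable.aestronglyMeasurable).2 h.2.2.1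
  have hsq : IsIndefiniteIntegral (fun x => φ x ^ 2) (fun x => 2 * φ x * φ' x) :=
    hprim.comp (fun s => by simpa using hasDerivAt_pow 2 s) (continuous_const_mul 2)
  have hsq_int : Integrable fun x => 2 * φ x * φ' x := by
    simpa only [mul_assoc, Pi.mul_apply] using (hφ_memLp.integrable_mul hφ'_memLp).const_mul 2
  rw [tendsto_zero_iff_abs_tendsto_zero]
  simpa only [Function.comp_def, Real.sqrt_sq_eq_abs, Real.sqrt_zero] using
    (hsq.tendsto_cocompact_zero h.2.1 hsq_int).sqrt

lemma integrable_pow_three (h : H1Pair φ φ') (hφ : φ ≠ 0) : Integrable fun x => φ x ^ 3 := by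
  let φ₀ : ZeroAtInftyContinuousMap ℝ ℝ := ⟨⟨φ, h.1⟩, h.tendsto_cocompact_zero hφ⟩
  simpa only [← pow_succ'] using h.2.1.bdd_mul h.1.aestronglyMeasurable
    (ae_of_all _ fun x => φ₀.toBCF.norm_coe_le_norm x)

end H1Pair

lemma hasDerivAt_mul_sqrt (x : ℝ) : HasDerivAt (fun y => y * √y) (3 / 2 * √x) x := by
  have hrpow : (fun y : ℝ => y * √y) = fun y => y ^ (3 / 2 : ℝ) := by
    funext y
    rcases eq_or_ne y 0 with rfl | hy
    · simp
    · rw [show (3 / 2 : ℝ) = 1 / 2 + 1 by norm_num, Real.rpow_add_one hy, Real.sqrt_eq_rpow,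
        mul_comm]
  rw [hrpow, Real.sqrt_eq_rpow, show (1 / 2 : ℝ) = 3 / 2 - 1 by norm_num]
  exact Real.hasDerivAt_rpow_const (Or.inr (by norm_num))

lemma hasDerivAt_primitive_mul_sqrt_add (M s : ℝ) :
    HasDerivAt (fun r => 2 / 15 * (3 * r - 2 * M) * ((M + r) * √(M + r))) (s * √(M + s)) s := by
  have hlin : HasDerivAt (fun r => 2 / 15 * (3 * r - 2 * M)) (2 / 15 * 3) s := by
    simpa using (((hasDerivAt_id s).const_mul 3).sub_const (2 * M)).const_mul (2 / 15)
  have hsqrt : HasDerivAt (fun r => (M + r) * √(M + r)) (3 / 2 * √(M + s)) s :=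
    (hasDerivAt_mul_sqrt (M + s)).comp_const_add M s
  exact (hlin.mul hsqrt).congr_deriv (by ring)

namespace H1Pair

variable {φ φ' : ℝ → ℝ} {c d : ℝ}

lemma le_energy_add_mass_of_isMinOn {t x₀ : ℝ} (h : H1Pair φ φ') (hφ : φ ≠ 0) (hc : 0 ≤ c)
    (hd : 0 ≤ d) (ht : 0 ≤ t) (hx₀ : φ x₀ = -t ^ 2) (hmin : IsMinOn φ univ x₀) :
    16 / 15 * (√c * √d) * t ^ 5 ≤ 2 * EKdV c d φ φ' + d * t ^ 2 * ∫ x, φ x ^ 2 := by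
  have henergy : Integrable fun x => c * φ' x ^ 2 + d * φ x ^ 3 :=
    (h.2.2.1.const_mul c).add ((h.integrable_pow_three hφ).const_mul d)
  have hmass : Integrable fun x => d * t ^ 2 * φ x ^ 2 := h.2.1.const_mul _
  have hsquares : ∀ x, c * φ' x ^ 2 + d * φ x ^ 3 + d * t ^ 2 * φ x ^ 2 =
      (√c * φ' x) ^ 2 + (√d * (φ x * √(t ^ 2 + φ x))) ^ 2 := fun x => by
    have hx : 0 ≤ t ^ 2 + φ x := by linarith [isMinOn_univ_iff.1 hmin x]
    simp only [mul_pow, Real.sq_sqrt hc, Real.sq_sqrt hd, Real.sq_sqrt hx]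
    ring
  have hbogomolny := (h.isIndefiniteIntegral hφ).four_mul_sub_le_integral (k := √c)
    (h.tendsto_cocompact_zero hφ)
    (fun s => (hasDerivAt_primitive_mul_sqrt_add (t ^ 2) s).const_mul √d)
    (by fun_prop) ((henergy.add hmass).congr (ae_of_all _ hsquares)) x₀
  simp only [← hsquares, integral_add henergy hmass, integral_const_mul, hx₀, add_neg_cancel,
    add_zero, Real.sqrt_sq ht] at hbogomolny
  unfold EKdV
  linarith

lemma exists_le_energy_add_mass (h : H1Pair φ φ') (hφ : φ ≠ 0) (hc : 0 ≤ c) (hd : 0 ≤ d) :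
    ∃ t, 0 ≤ t ∧
      16 / 15 * (√c * √d) * t ^ 5 ≤ 2 * EKdV c d φ φ' + d * t ^ 2 * ∫ x, φ x ^ 2 := by
  by_cases hneg : ∃ y, φ y < 0
  · obtain ⟨y, hy⟩ := hneg
    obtain ⟨x₀, hx₀⟩ := h.1.exists_forall_le' y
      (((h.tendsto_cocompact_zero hφ).eventually_const_lt hy).mono fun _ => le_of_lt)
    refine ⟨√(-φ x₀), Real.sqrt_nonneg _, h.le_energy_add_mass_of_isMinOn hφ hc hd
      (Real.sqrt_nonneg _) ?_ (isMinOn_univ_iff.2 hx₀)⟩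
    rw [Real.sq_sqrt (by linarith [hx₀ y]), neg_neg]
  · push Not at hneg
    have hE : 0 ≤ EKdV c d φ φ' := mul_nonneg (by norm_num) <|
      integral_nonneg fun x => by have := hneg x; positivity
    exact ⟨0, le_rfl, by simpa using hE⟩

end H1Pair

lemma five_mul_sq_mul_pow_three_le {t u : ℝ} (ht : 0 ≤ t) (hu : 0 ≤ u) :
    5 * t ^ 2 * u ^ 3 ≤ 2 * t ^ 5 + 3 * u ^ 5 := by
  have hfactor : 2 * t ^ 5 + 3 * u ^ 5 - 5 * t ^ 2 * u ^ 3 =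
      (t - u) ^ 2 * (2 * t ^ 3 + 4 * u * t ^ 2 + 6 * u ^ 2 * t + 3 * u ^ 3) := by ring
  rw [← sub_nonneg, hfactor]
  positivity

theorem H1Pair.le_EKdV {φ φ' : ℝ → ℝ} {c d B : ℝ} (h : H1Pair φ φ') (hc : 0 < c) (hd : 0 < d)
    (hB : 0 < B) (hmass : ∫ x, φ x ^ 2 = 64 / 3 * c ^ 2 * B ^ 3 / d ^ 2) :
    -(128 / 5) * c ^ 3 * B ^ 5 / d ^ 2 ≤ EKdV c d φ φ' := by
  have hφ : φ ≠ 0 := by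
    rintro rfl
    have : 0 < 64 / 3 * c ^ 2 * B ^ 3 / d ^ 2 := by positivity
    simp [← hmass] at this
  obtain ⟨t, ht, hbound⟩ := h.exists_le_energy_add_mass hφ hc.le hd.le
  rw [hmass] at hbound
  generalize EKdV c d φ φ' = E at hbound ⊢
  obtain ⟨σ, hσ, rfl⟩ : ∃ σ, 0 < σ ∧ σ ^ 2 = c := ⟨√c, Real.sqrt_pos.2 hc, Real.sq_sqrt hc.le⟩
  obtain ⟨δ, hδ, rfl⟩ : ∃ δ, 0 < δ ∧ δ ^ 2 = d := ⟨√d, Real.sqrt_pos.2 hd, Real.sq_sqrt hd.le⟩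
  rw [Real.sqrt_sq hσ.le, Real.sqrt_sq hδ.le] at hbound
  have hyoung := mul_le_mul_of_nonneg_left
    (five_mul_sq_mul_pow_three_le ht (u := 2 * B * σ / δ) (by positivity))
    (show 0 ≤ 8 / 15 * (σ * δ) by positivity)
  have hcross : 8 / 15 * (σ * δ) * (5 * t ^ 2 * (2 * B * σ / δ) ^ 3) =
      δ ^ 2 * t ^ 2 * (64 / 3 * (σ ^ 2) ^ 2 * B ^ 3 / (δ ^ 2) ^ 2) := by
    field
  have hfifth : 8 / 15 * (σ * δ) * (3 * (2 * B * σ / δ) ^ 5) =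
      -2 * (-(128 / 5) * (σ ^ 2) ^ 3 * B ^ 5 / (δ ^ 2) ^ 2) := by
    field
  linarith

lemma sech_sq (x : ℝ) : sech x ^ 2 = 1 - Real.tanh x ^ 2 := by
  have hcosh := (Real.cosh_pos x).ne'
  rw [sech, Real.tanh_eq_sinh_div_cosh]
  field_simp
  linarith [Real.cosh_sq x]

lemma hasDerivAt_tanh (x : ℝ) : HasDerivAt Real.tanh (sech x ^ 2) x := by
  have hcosh := (Real.cosh_pos x).ne'
  have hquot := (Real.hasDerivAt_sinh x).div (Real.hasDerivAt_cosh x) hcosh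
  refine (hquot.congr_deriv ?_).congr_of_eventuallyEq
    (Eventually.of_forall Real.tanh_eq_sinh_div_cosh)
  rw [sech, div_pow, one_pow, ← Real.cosh_sq_sub_sinh_sq x]
  ring

lemma hasDerivAt_sech_sq (x : ℝ) :
    HasDerivAt (fun y => sech y ^ 2) (-2 * Real.tanh x * sech x ^ 2) x := by
  simp only [sech_sq]
  refine (((hasDerivAt_tanh x).pow 2).const_sub 1).congr_deriv ?_
  rw [sech_sq]
  ring

lemma integrable_sech_sq_mul_comp_tanh {p : ℝ → ℝ} (hp : IntegrableOn p (Ioo (-1) 1)) :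
    Integrable fun x => sech x ^ 2 * p (Real.tanh x) := by
  rw [← Real.tanh_bijOn.image_eq] at hp
  simpa only [integrableOn_univ, abs_sq, smul_eq_mul] using
    (integrableOn_image_iff_integrableOn_abs_deriv_smul MeasurableSet.univ
      (fun x _ => (hasDerivAt_tanh x).hasDerivWithinAt) Real.tanh_injective.injOn p).1 hp

lemma integral_sech_sq_mul_comp_tanh (p : ℝ → ℝ) :
    ∫ x, sech x ^ 2 * p (Real.tanh x) = ∫ s in (-1)..1, p s := by
  have hsubst := integral_image_eq_integral_abs_deriv_smul MeasurableSet.univ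
    (fun x _ => (hasDerivAt_tanh x).hasDerivWithinAt) Real.tanh_injective.injOn p
  simp only [Real.tanh_bijOn.image_eq, Measure.restrict_univ, abs_sq, smul_eq_mul] at hsubst
  rw [← hsubst, intervalIntegral.integral_of_le (by norm_num), integral_Ioc_eq_integral_Ioo]

lemma integral_sech_sq_mul_comp_tanh_mul_left {B : ℝ} (hB : 0 ≤ B) (p : ℝ → ℝ) :
    ∫ x, sech (B * x) ^ 2 * p (Real.tanh (B * x)) = B⁻¹ * ∫ s in (-1)..1, p s := by
  rw [Measure.integral_comp_mul_left (fun y => sech y ^ 2 * p (Real.tanh y)),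
    abs_of_nonneg (inv_nonneg.2 hB), integral_sech_sq_mul_comp_tanh, smul_eq_mul]

/-- The profile of the solitary wave of inverse width `B`. Its amplitude is forced by the
Euler–Lagrange equation of `EKdV c d` under a constraint on `∫ φ ^ 2`. -/
noncomputable def kdvSoliton (c d B x : ℝ) : ℝ := -(4 * c * B ^ 2 / d) * sech (B * x) ^ 2

section Soliton

variable (c d : ℝ) {B : ℝ}

lemma sq_mul_kdvSoliton_mul (l κ x : ℝ) :
    l ^ 2 * kdvSoliton c d κ (l * x) = kdvSoliton c d (l * κ) x := by
  rw [kdvSoliton, kdvSoliton, show κ * (l * x) = l * κ * x by ring]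
  ring

lemma hasDerivAt_kdvSoliton (B x : ℝ) :
    HasDerivAt (kdvSoliton c d B)
      (8 * c * B ^ 3 / d * (Real.tanh (B * x) * sech (B * x) ^ 2)) x := by
  have hinner : HasDerivAt (fun y => B * y) B x := by simpa using (hasDerivAt_id x).const_mul B
  exact (((hasDerivAt_sech_sq (B * x)).comp x hinner).const_mul _).congr_deriv (by ring)

lemma deriv_kdvSoliton (B : ℝ) :
    deriv (kdvSoliton c d B) =
      fun x => 8 * c * B ^ 3 / d * (Real.tanh (B * x) * sech (B * x) ^ 2) :=
  funext fun x => (hasDerivAt_kdvSoliton c d B x).deriv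

lemma kdvSoliton_sq (B x : ℝ) :
    kdvSoliton c d B x ^ 2 =
      (4 * c * B ^ 2 / d) ^ 2 * (sech (B * x) ^ 2 * (1 - Real.tanh (B * x) ^ 2)) := by
  rw [kdvSoliton, ← sech_sq]
  ring

lemma deriv_kdvSoliton_sq (B x : ℝ) :
    deriv (kdvSoliton c d B) x ^ 2 = (8 * c * B ^ 3 / d) ^ 2 *
      (sech (B * x) ^ 2 * (Real.tanh (B * x) ^ 2 * (1 - Real.tanh (B * x) ^ 2))) := by
  rw [deriv_kdvSoliton, ← sech_sq]
  ring

lemma h1Pair_kdvSoliton (hB : B ≠ 0) : H1Pair (kdvSoliton c d B) (deriv (kdvSoliton c d B)) := by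
  have hintegrable : ∀ {p : ℝ → ℝ}, Continuous p → ∀ K : ℝ,
      Integrable fun x => K * (sech (B * x) ^ 2 * p (Real.tanh (B * x))) := fun hp K =>
    ((integrable_sech_sq_mul_comp_tanh
      (hp.integrableOn_Icc.mono_set Ioo_subset_Icc_self)).comp_mul_left' hB).const_mul K
  have hcontinuous : Continuous (deriv (kdvSoliton c d B)) := by
    have htanh : Continuous Real.tanh :=
      continuous_iff_continuousAt.2 fun x => (hasDerivAt_tanh x).continuousAt
    simp only [deriv_kdvSoliton, sech_sq]
    fun_prop
  refine ⟨continuous_iff_continuousAt.2 fun x => (hasDerivAt_kdvSoliton c d B x).continuousAt,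
    ?_, ?_, fun a b _ => ?_⟩
  · simpa only [kdvSoliton_sq] using hintegrable (p := fun s => 1 - s ^ 2) (by fun_prop) _
  · simpa only [deriv_kdvSoliton_sq] using
      hintegrable (p := fun s => s ^ 2 * (1 - s ^ 2)) (by fun_prop) _
  · exact (intervalIntegral.integral_deriv_eq_sub
      (fun x _ => (hasDerivAt_kdvSoliton c d B x).differentiableAt)
      (hcontinuous.intervalIntegrable a b)).symm

lemma integral_kdvSoliton_sq (hB : 0 < B) :
    ∫ x, kdvSoliton c d B x ^ 2 = 64 / 3 * c ^ 2 * B ^ 3 / d ^ 2 := by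
  have hquad : ∫ s in (-1 : ℝ)..1, (1 - s ^ 2) = 4 / 3 := by norm_num
  simp only [kdvSoliton_sq, integral_const_mul]
  rw [integral_sech_sq_mul_comp_tanh_mul_left hB.le (fun s => 1 - s ^ 2), hquad]
  field

lemma EKdV_kdvSoliton {d : ℝ} (hd : d ≠ 0) (hB : 0 < B) :
    EKdV c d (kdvSoliton c d B) (deriv (kdvSoliton c d B)) =
      -(128 / 5) * c ^ 3 * B ^ 5 / d ^ 2 := by
  have hdensity : ∀ x, c * deriv (kdvSoliton c d B) x ^ 2 + d * kdvSoliton c d B x ^ 3 =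
      64 * c ^ 3 * B ^ 6 / d ^ 2 * (sech (B * x) ^ 2 *
        ((1 - Real.tanh (B * x) ^ 2) * (2 * Real.tanh (B * x) ^ 2 - 1))) := fun x => by
    rw [deriv_kdvSoliton_sq, kdvSoliton, sech_sq]
    field
  have hquartic : ∫ s in (-1 : ℝ)..1, ((1 - s ^ 2) * (2 * s ^ 2 - 1)) = -(4 / 5) := by
    have hderiv : ∀ s ∈ uIcc (-1 : ℝ) 1, HasDerivAt (fun r => r ^ 3 - r - 2 / 5 * r ^ 5)
        ((1 - s ^ 2) * (2 * s ^ 2 - 1)) s := fun s _ =>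
      (((hasDerivAt_pow 3 s).sub (hasDerivAt_id s)).sub
        ((hasDerivAt_pow 5 s).const_mul (2 / 5))).congr_deriv (by norm_num; ring)
    rw [intervalIntegral.integral_eq_sub_of_hasDerivAt hderiv
      (Continuous.intervalIntegrable (by fun_prop) _ _)]
    norm_num
  simp only [EKdV, hdensity, integral_const_mul]
  rw [integral_sech_sq_mul_comp_tanh_mul_left hB.le
    (fun s => (1 - s ^ 2) * (2 * s ^ 2 - 1)), hquartic]
  field

end Soliton

lemma three_div_sixteen_rpow_two_div_three_eq_sqrt :
    (3 / 16 : ℝ) ^ (2 / 3 : ℝ) = √3 / 4 * (3 / 16) ^ (1 / 6 : ℝ) := by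
  have hsqrt : √(3 / 16 : ℝ) = √3 / 4 := by
    rw [Real.sqrt_div (by norm_num), show (16 : ℝ) = 4 ^ 2 by norm_num, Real.sqrt_sq (by norm_num)]
  rw [← hsqrt, Real.sqrt_eq_rpow, ← Real.rpow_add (by norm_num)]
  norm_num

lemma three_div_sixteen_rpow_two_div_three_eq_rpow :
    (3 / 16 : ℝ) ^ (2 / 3 : ℝ) = 3 / 8 * (2 / 3) ^ (1 / 3 : ℝ) := by
  have hcube : ((3 / 8 : ℝ) ^ 3) ^ (1 / 3 : ℝ) = 3 / 8 := by
    rw [← Real.rpow_natCast_mul (by norm_num)]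
    norm_num
  calc (3 / 16 : ℝ) ^ (2 / 3 : ℝ) = ((3 / 16) ^ 2) ^ (1 / 3 : ℝ) := by
        rw [← Real.rpow_natCast_mul (by norm_num)]
        norm_num
    _ = ((3 / 8) ^ 3 * (2 / 3)) ^ (1 / 3 : ℝ) := by norm_num
    _ = 3 / 8 * (2 / 3) ^ (1 / 3 : ℝ) := by
        rw [Real.mul_rpow (by norm_num) (by norm_num), hcube]

/-- The inverse width of the soliton `φ_KdV`, with `W` standing for `ω ^ 2 + 4`. -/
noncomputable def kdvWaveNumber (c d W : ℝ) : ℝ :=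
  (3 / 16) ^ (1 / 3 : ℝ) * d ^ (2 / 3 : ℝ) / (c ^ (2 / 3 : ℝ) * W ^ (1 / 6 : ℝ))

section WaveNumber

variable {a c d W : ℝ}

lemma kdvWaveNumber_pos (hc : 0 < c) (hd : 0 < d) (hW : 0 < W) : 0 < kdvWaveNumber c d W := by
  unfold kdvWaveNumber
  positivity

lemma kdvWaveNumber_pow (hc : 0 ≤ c) (hd : 0 ≤ d) (hW : 0 ≤ W) (n : ℕ) :
    kdvWaveNumber c d W ^ n =
      (3 / 16) ^ (1 / 3 * n : ℝ) * d ^ (2 / 3 * n : ℝ) /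
        (c ^ (2 / 3 * n : ℝ) * W ^ (1 / 6 * n : ℝ)) := by
  rw [kdvWaveNumber, div_pow, mul_pow, mul_pow, Real.rpow_mul_natCast (by norm_num),
    Real.rpow_mul_natCast hd, Real.rpow_mul_natCast hc, Real.rpow_mul_natCast hW]

lemma kdvSoliton_kdvWaveNumber (hc : 0 < c) (hd : 0 < d) (hW : 0 < W) (x : ℝ) :
    kdvSoliton c d (kdvWaveNumber c d W) x =
      -√3 * (3 / 16) ^ (1 / 6 : ℝ) * d ^ (1 / 3 : ℝ) / (c ^ (1 / 3 : ℝ) * W ^ (1 / 3 : ℝ)) *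
        sech (kdvWaveNumber c d W * x) ^ 2 := by
  have hsq : kdvWaveNumber c d W ^ 2 =
      (√3 / 4 * (3 / 16) ^ (1 / 6 : ℝ)) * (d * d ^ (1 / 3 : ℝ)) /
        (c * c ^ (1 / 3 : ℝ) * W ^ (1 / 3 : ℝ)) := by
    rw [kdvWaveNumber_pow hc.le hd.le hW.le, ← three_div_sixteen_rpow_two_div_three_eq_sqrt,
      ← Real.rpow_one_add' hd.le (by norm_num), ← Real.rpow_one_add' hc.le (by norm_num)]
    norm_num
  rw [kdvSoliton, hsq]
  field

lemma mass_rpow_mul_kdvWaveNumber (ha : 0 ≤ a) (hc : 0 < c) (hd : 0 < d) (hW : 0 < W) :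
    64 / 3 * c ^ 2 * (a ^ (1 / 3 : ℝ) * kdvWaveNumber c d W) ^ 3 / d ^ 2 =
      2 * a * (2 * W ^ (-1 / 2 : ℝ)) := by
  have hcube : kdvWaveNumber c d W ^ 3 = 3 / 16 * d ^ 2 / (c ^ 2 * W ^ (1 / 2 : ℝ)) := by
    rw [kdvWaveNumber_pow hc.le hd.le hW.le]
    norm_num
  have ha_cube : (a ^ (1 / 3 : ℝ)) ^ 3 = a := by
    rw [← Real.rpow_mul_natCast ha]
    norm_num
  rw [mul_pow, hcube, ha_cube, neg_div, Real.rpow_neg hW.le]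
  field

lemma energy_rpow_mul_kdvWaveNumber (ha : 0 ≤ a) (hc : 0 < c) (hd : 0 < d) (hW : 0 < W) :
    -(128 / 5) * c ^ 3 * (a ^ (1 / 3 : ℝ) * kdvWaveNumber c d W) ^ 5 / d ^ 2 =
      a ^ (5 / 3 : ℝ) * (-(9 / 5) * (2 / 3) ^ (1 / 3 : ℝ) * d ^ (4 / 3 : ℝ) /
        (c ^ (1 / 3 : ℝ) * W ^ (5 / 6 : ℝ))) := by
  have hfifth : kdvWaveNumber c d W ^ 5 =
      3 / 16 * (3 / 8 * (2 / 3) ^ (1 / 3 : ℝ)) * (d ^ (4 / 3 : ℝ) * d ^ 2) /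
        (c ^ (1 / 3 : ℝ) * c ^ 3 * W ^ (5 / 6 : ℝ)) := by
    rw [kdvWaveNumber_pow hc.le hd.le hW.le, ← three_div_sixteen_rpow_two_div_three_eq_rpow,
      ← Real.rpow_one_add' (by norm_num) (by norm_num), ← Real.rpow_add_natCast hd.ne',
      ← Real.rpow_add_natCast hc.ne']
    norm_num
  have ha_fifth : (a ^ (1 / 3 : ℝ)) ^ 5 = a ^ (5 / 3 : ℝ) := by
    rw [← Real.rpow_mul_natCast ha]
    norm_num
  rw [mul_pow, hfifth, ha_fifth]
  field

end WaveNumber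

theorem stmt16 (ν₀ ω β : ℝ) (hν₀ : 0 < ν₀) (hβ : ν₀ ^ 2 / 3 < β)
    (c d αK cK : ℝ) (hc : c = β - ν₀ ^ 2 / 3) (hd : d = ω ^ 2 / 3 + 1)
    (hα : αK = 2 * (ω ^ 2 + 4) ^ (-(1 : ℝ) / 2))
    (hcK : cK = -(9 / 5) * (2 / 3 : ℝ) ^ ((1 : ℝ) / 3) * d ^ ((4 : ℝ) / 3) /
      (c ^ ((1 : ℝ) / 3) * (ω ^ 2 + 4) ^ ((5 : ℝ) / 6)))
    (φK : ℝ → ℝ)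
    (hφK : ∀ x, φK x = -Real.sqrt 3 * (3 / 16 : ℝ) ^ ((1 : ℝ) / 6) * d ^ ((1 : ℝ) / 3) /
      (c ^ ((1 : ℝ) / 3) * (ω ^ 2 + 4) ^ ((1 : ℝ) / 3)) *
      sech ((3 / 16 : ℝ) ^ ((1 : ℝ) / 3) * d ^ ((2 : ℝ) / 3) * x /
        (c ^ ((2 : ℝ) / 3) * (ω ^ 2 + 4) ^ ((1 : ℝ) / 6))) ^ 2) :
    ∀ a : ℝ, 0 < a →
      (∀ φ φ' : ℝ → ℝ, H1Pair φ φ' → (∫ x : ℝ, (φ x) ^ 2) = 2 * a * αK →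
        a ^ ((5 : ℝ) / 3) * cK ≤ EKdV c d φ φ') ∧
      H1Pair (fun x => a ^ ((2 : ℝ) / 3) * φK (a ^ ((1 : ℝ) / 3) * x))
        (deriv (fun x => a ^ ((2 : ℝ) / 3) * φK (a ^ ((1 : ℝ) / 3) * x))) ∧
      (∫ x : ℝ, (a ^ ((2 : ℝ) / 3) * φK (a ^ ((1 : ℝ) / 3) * x)) ^ 2) = 2 * a * αK ∧
      EKdV c d (fun x => a ^ ((2 : ℝ) / 3) * φK (a ^ ((1 : ℝ) / 3) * x))
        (deriv (fun x => a ^ ((2 : ℝ) / 3) * φK (a ^ ((1 : ℝ) / 3) * x))) =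
        a ^ ((5 : ℝ) / 3) * cK := by
  have hc_pos : 0 < c := by linarith
  have hd_pos : 0 < d := by rw [hd]; positivity
  have hW_pos : 0 < ω ^ 2 + 4 := by positivity
  have hφK_eq : φK = kdvSoliton c d (kdvWaveNumber c d (ω ^ 2 + 4)) := funext fun x => by
    rw [hφK, kdvSoliton_kdvWaveNumber hc_pos hd_pos hW_pos, kdvWaveNumber, mul_div_right_comm _ x]
  intro a ha
  have hB_pos := mul_pos (Real.rpow_pos_of_pos ha (1 / 3)) (kdvWaveNumber_pos hc_pos hd_pos hW_pos)
  have ha_sq : a ^ ((2 : ℝ) / 3) = (a ^ ((1 : ℝ) / 3)) ^ 2 := by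
    rw [← Real.rpow_mul_natCast ha.le]
    norm_num
  simp only [hφK_eq, ha_sq, sq_mul_kdvSoliton_mul, hα, hcK]
  rw [← mass_rpow_mul_kdvWaveNumber ha.le hc_pos hd_pos hW_pos,
    ← energy_rpow_mul_kdvWaveNumber ha.le hc_pos hd_pos hW_pos]
  exact ⟨fun φ φ' h hmass => h.le_EKdV hc_pos hd_pos hB_pos hmass,
    h1Pair_kdvSoliton c d hB_pos.ne', integral_kdvSoliton_sq c d hB_pos,
    EKdV_kdvSoliton c hd_pos.ne' hB_pos⟩
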